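/- For all n ≥ 3 and all natural numbers u, v, the number of parallelogram polyominoes P ∈ PP(n−2,3) with area(P) = u and bounce(P) = v equals the number of P ∈ PP(n−2,3) with area(P) = v and bounce(P) = u. (The q,t-symmetry N_{n,3}(q,t) = N_{n,3}(t,q) of the q,t-Narayana polynomial defined by the pair (area, bounce) on polyominoes.) -/

import Mathlib

namespace QtN

/-! ### Lattice paths and parallelogram polyominoes -/

/-- A step of a lattice path: east or north. -/
inductive Step : Type
  | E : Step
  | N : Step
  deriving DecidableEq, Repr

/-- Number of east steps of a path. -/
def countE (w : List Step) : ℕ := w.count Step.E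

/-- Number of north steps of a path. -/
def countN (w : List Step) : ℕ := w.count Step.N

/-- Endpoint of a path started at the origin. -/
def pathPos (w : List Step) : ℕ × ℕ := (countE w, countN w)

/-- The set of lattice points visited by a path started at the origin. -/
def pathPts (w : List Step) : Finset (ℕ × ℕ) :=
  ((List.range (w.length + 1)).map (fun i => pathPos (w.take i))).toFinset

/-- `colHeightsAux w h`: for each east step of `w` (in order), the number of north
steps preceding it, starting with `h` north steps already performed. -/
def colHeightsAux : List Step → ℕ → List ℕ
  | [], _ => []
  | Step.E :: r, h => h :: colHeightsAux r h
  | Step.N :: r, h => colHeightsAux r (h + 1)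

/-- Height at which the path `w` crosses the vertical strip `i ≤ x ≤ i + 1`. -/
def colHeight (w : List Step) (i : ℕ) : ℕ := (colHeightsAux w 0).getD i 0

/-- A parallelogram polyomino of size `m × n`: a pair of monotone lattice paths from
`(0,0)` to `(m,n)` (east/north steps), the upper path staying weakly above the lower
path, and the two paths meeting only at `(0,0)` and `(m,n)`. -/
structure Polyomino (m n : ℕ) : Type where
  lower : List Step
  upper : List Step
  lowerE : countE lower = m
  lowerN : countN lower = n
  upperE : countE upper = m
  upperN : countN upper = n
  above : ∀ i < m, colHeight lower i ≤ colHeight upper i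
  meet : pathPts upper ∩ pathPts lower = {(0, 0), (m, n)}

/-- The area statistic: number of unit squares between the two paths,
minus `(m + n - 1)`. -/
def area {m n : ℕ} (P : Polyomino m n) : ℕ :=
  (∑ i ∈ Finset.range m, (colHeight P.upper i - colHeight P.lower i)) - (m + n - 1)

/-- Where an eastward run at height `y`, starting at `x`, first hits the lower path. -/
def eastTarget (hL : ℕ → ℕ) (m x y : ℕ) : ℕ :=
  ((List.range m).filter (fun i => decide (x ≤ i ∧ y ≤ hL i))).headD m

/-- Total bounce contribution: from state `(x, y)` just after the `j`-th east-to-north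
turn (counting the turns made so far), alternately go north until hitting the upper
path and east until hitting the lower path, each step contributing the number of
east-to-north turns preceding it. -/
def bounceAux (hU hL : ℕ → ℕ) (m n : ℕ) : ℕ → ℕ → ℕ → ℕ → ℕ
  | 0, _, _, _ => 0
  | fuel + 1, x, y, j =>
    if x = m ∧ y = n then 0
    else
      let y' := hU (x - 1)
      let x' := if y' = n then m else eastTarget hL m x y'
      (j + 1) * ((y' - y) + (x' - x)) + bounceAux hU hL m n fuel x' y' (j + 1)

/-- The bounce statistic of a parallelogram polyomino: the bounce path starts with a
single east step (contributing `0`) and then alternates north runs (to the ceiling)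
and east runs (to the floor); each step contributes the number of east-to-north turns
preceding it; finally `(m + n - 1)` is subtracted. -/
def bounce {m n : ℕ} (P : Polyomino m n) : ℕ :=
  bounceAux (colHeight P.upper) (colHeight P.lower) m n (m + n + 2) 1 0 0 - (m + n - 1)

/-! ### Set partitions and noncrossing partitions -/

/-- Maximum of a finite set of naturals (`0` for the empty set). -/
def fmax (β : Finset ℕ) : ℕ := β.sup id

/-- Minimum of a finite set of naturals (`0` for the empty set). -/
def fmin (β : Finset ℕ) : ℕ := if h : β.Nonempty then β.min' h else 0

/-- A set partition of `{1, …, n}`, given by its finite set of blocks. -/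
structure SetPartition (n : ℕ) : Type where
  blocks : Finset (Finset ℕ)
  not_empty_mem : ∅ ∉ blocks
  cover : ∀ i : ℕ, i ∈ Finset.Icc 1 n ↔ ∃ β ∈ blocks, i ∈ β
  disjoint : ∀ β ∈ blocks, ∀ γ ∈ blocks, β ≠ γ → Disjoint β γ

/-- A family of blocks is noncrossing if there are no `a < b < c < d` with
`a, c` in one block and `b, d` in a different block. -/
def IsNoncrossing (bs : Finset (Finset ℕ)) : Prop :=
  ∀ a b c d : ℕ, a < b → b < c → c < d →
    ∀ β ∈ bs, ∀ γ ∈ bs, a ∈ β → c ∈ β → b ∈ γ → d ∈ γ → β = γ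

/-- `NC n k`: noncrossing partitions of `{1, …, n}` with exactly `n - k + 1` blocks. -/
abbrev NC (n k : ℕ) : Type :=
  {P : SetPartition n // IsNoncrossing P.blocks ∧ P.blocks.card = n - k + 1}

/-- The skip statistic: `∑_{β} (max β - min β - |β| + 1)`. -/
def skip (bs : Finset (Finset ℕ)) : ℕ :=
  ∑ β ∈ bs, ((fmax β + 1 - fmin β) - β.card)

/-- The non-singleton blocks of a partition. -/
def nsBlocks (bs : Finset (Finset ℕ)) : Finset (Finset ℕ) :=
  bs.filter (fun β => 2 ≤ β.card)

/-- The block of `bs` containing `x` (junk if there is not exactly one). -/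
def blockContaining (bs : Finset (Finset ℕ)) (x : ℕ) : Finset ℕ :=
  (bs.filter (fun β => x ∈ β)).sup id

/-- For a noncrossing partition in `NC n 3`, the quadruple `(a, b, c, d)` describing its
non-singleton blocks: for two pair blocks `{a,b}` and `{c,d}` (with `a` the global
minimum) this is `(a, b, c, d)`; for a single triple block `{a, b, c}` (`a < b < c`)
this is `(a, b, b, c)`. -/
def blockQuad (bs : Finset (Finset ℕ)) : ℕ × ℕ × ℕ × ℕ :=
  let A := blockContaining (nsBlocks bs) (fmin ((nsBlocks bs).sup id))
  if (nsBlocks bs).card = 1 then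
    let l := A.sort (· ≤ ·)
    (l.getD 0 0, l.getD 1 0, l.getD 1 0, l.getD 2 0)
  else
    let B := ((nsBlocks bs).erase A).sup id
    (fmin A, fmax A, fmin B, fmax B)

/-- The leap statistic on `NC n 3`: `leap(ab|cd) = c - 2 + max(0, c - b)`,
and `leap({a,b,c}) = b - 2` (the case `b = c`). -/
def leap (bs : Finset (Finset ℕ)) : ℕ :=
  let (_, b, c, _) := blockQuad bs
  (c - 2) + (c - b)

/-- The skew statistic on `NC n 3`: `skew(ab|cd) = c - 2 + a` if `b < c`, else `c - 2`;
`skew({a,b,c}) = b - 2` (the case `b = c`). -/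
def skew (bs : Finset (Finset ℕ)) : ℕ :=
  let (a, b, c, _) := blockQuad bs
  if b < c then c - 2 + a else c - 2

/-- The mag statistic on `NC n 3`: `mag(ab|cd) = a + max(b, c) - 2 - ⌈(b - a)/2⌉`,
and `mag({a,b,c}) = a + b - 2 - ⌈(b - a)/2⌉` (the case `b = c`). -/
def mag (bs : Finset (Finset ℕ)) : ℕ :=
  let (a, b, c, _) := blockQuad bs
  a + max b c - 2 - (b - a + 1) / 2

/-- The area statistic on noncrossing partitions:
`area(π) = ∑_{β, β' ∈ π} #{ i ∈ β' : i < max β < max β' }` (ordered pairs of blocks). -/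
def ncArea (bs : Finset (Finset ℕ)) : ℕ :=
  ∑ β ∈ bs, ∑ γ ∈ bs, (γ.filter (fun i => i < fmax β ∧ fmax β < fmax γ)).card

/-- The elements of the non-singleton blocks, listed in increasing order, with
the middle element of a size-3 block listed twice. -/
def nsList (bs : Finset (Finset ℕ)) : List ℕ :=
  let l := ((nsBlocks bs).sup id).sort (· ≤ ·)
  if l.length = 3 then [l.getD 0 0, l.getD 1 0, l.getD 1 0, l.getD 2 0] else l

/-- The multiset of block sizes of a partition. -/
def blockSizes (bs : Finset (Finset ℕ)) : Multiset ℕ := bs.val.map Finset.card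

/-- The image of a partition of `{1, …, n}` under the flip `i ↦ n + 1 - i`. -/
def flipBlocks (n : ℕ) (bs : Finset (Finset ℕ)) : Finset (Finset ℕ) :=
  bs.image (fun β => β.image (fun i => n + 1 - i))

/-! ### The mingarc statistic -/

/-- The gaps `ν_r = m_{r+1} - m_r - 1` between consecutive block minima
`m_1 < ⋯ < m_h` (with `m_{h+1} = n + 1`). -/
def nuList (n : ℕ) (bs : Finset (Finset ℕ)) : List ℕ :=
  let ms := ((bs.image fmin).sort (· ≤ ·)) ++ [n + 1]
  (List.range (bs.image fmin).card).map (fun r => ms.getD (r + 1) 0 - ms.getD r 0 - 1)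

/-- Concatenation of `replicate ν c` over a list of pairs `(c, ν)`. -/
def repeatEach : List (ℕ × ℕ) → List ℕ
  | [] => []
  | p :: r => List.replicate p.2 p.1 ++ repeatEach r

/-- The right endpoints `y_1 ≤ ⋯ ≤ y_{k-1}`: each block maximum `c_r` repeated
`ν_r` times, in increasing order. -/
def ysList (n : ℕ) (bs : Finset (Finset ℕ)) : List ℕ :=
  repeatEach (List.zip ((bs.image fmax).sort (· ≤ ·)) (nuList n bs))

/-- The left endpoints `x_1 < ⋯ < x_{k-1}`: the elements of `{1, …, n}` that are not
block maxima, in increasing order. -/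
def xsList (n : ℕ) (bs : Finset (Finset ℕ)) : List ℕ :=
  ((Finset.Icc 1 n).filter (fun i => i ∉ bs.image fmax)).sort (· ≤ ·)

/-- Greedy left-to-right selection of arcs: keep the first arc, and thereafter keep the
earliest arc whose left endpoint exceeds the right endpoint of the last kept arc. -/
def greedyArcs : List (ℕ × ℕ) → Option ℕ → List (ℕ × ℕ)
  | [], _ => []
  | a :: rest, none => a :: greedyArcs rest (some a.2)
  | a :: rest, some r =>
      if r < a.1 then a :: greedyArcs rest (some a.2) else greedyArcs rest (some r)

/-- The mingarc statistic: the sum of `n - y_i` over the greedily selected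
candidate arcs `[x_i, y_i]`. -/
def mingarc (n : ℕ) (bs : Finset (Finset ℕ)) : ℕ :=
  ((greedyArcs (List.zip (xsList n bs) (ysList n bs)) none).map (fun p => n - p.2)).sum

/-! ### The map η from polyominoes to noncrossing partitions -/

/-- Largest column index `i < m` with `colHeight lower i ≤ j`: the rightmost cell
adjacent to the floor in row `j`. -/
def eFloor {m k : ℕ} (P : Polyomino m k) (j : ℕ) : ℕ :=
  (((List.range m).filter (fun i => decide (colHeight P.lower i ≤ j))).getLastD 0)

/-- Smallest column index `i` with `colHeight upper i ≥ j + 1`: the leftmost cell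
adjacent to the ceiling in row `j` (with default `m - 1`). -/
def fCeil {m k : ℕ} (P : Polyomino m k) (j : ℕ) : ℕ :=
  (((List.range m).filter (fun i => decide (j + 1 ≤ colHeight P.upper i))).headD (m - 1))

/-- The number of cells adjacent to the ceiling in row `j`. -/
def rowCount {m k : ℕ} (P : Polyomino m k) (j : ℕ) : ℕ :=
  fCeil P (j + 1) - fCeil P j + 1

/-- Pick, `cnt` times, the largest label in `{1, …, L}` not used yet. -/
def pickRow : ℕ → ℕ → Finset ℕ → Finset ℕ
  | 0, _, _ => ∅
  | cnt + 1, L, used =>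
      let x := fmax ((Finset.Icc 1 L) \ used)
      insert x (pickRow cnt L (insert x used))

/-- The blocks of `η(P)`: label the cells adjacent to the floor `1, …, n` going bottom
to top, left to right (the label of the floor cell in column `i`, row `j` is
`i + j + 1`, and the labels present in rows `≤ j` are exactly `1, …, eFloor P j + j + 1`);
then going bottom to top, left to right over the cells adjacent to the ceiling, assign
to each the largest unused indexing label occurring in the same row or below; the
blocks are the label sets of the ceiling rows. -/
def etaBlocks {m k : ℕ} (P : Polyomino m k) : Finset (Finset ℕ) :=
  (((List.range k).foldl
      (fun st j =>
        let B := pickRow (rowCount P j) (eFloor P j + j + 1) st.1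
        (st.1 ∪ B, B :: st.2))
      ((∅ : Finset ℕ), ([] : List (Finset ℕ)))).2).toFinset


section
open Finset
set_option linter.unusedSimpArgs false
set_option linter.unusedSectionVars false

def gsum {K : Type*} [Field K] (q : K) (k : ℕ) : K := ∑ i ∈ range k, q ^ i

theorem gsum_closed {K : Type*} [Field K] (q : K) (h : 1 - q ≠ 0) (k : ℕ) :
    gsum q k = (1 - q ^ k) / (1 - q) := by
  induction k with
  | zero => simp [gsum]
  | succ k ih =>
    rw [gsum, sum_range_succ, ← gsum, ih]; field_simp; ring

def sA {K : Type*} [Field K] (q : K) (M : ℕ) : K :=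
  ∑ s ∈ range (M + 1), gsum q (s + 1) * q ^ s
def sB {K : Type*} [Field K] (q t : K) (M : ℕ) : K :=
  ∑ s ∈ range M, gsum q (s + 2) * gsum q (s + 1) * t ^ (M - s)
def sG {K : Type*} [Field K] (q t : K) (M : ℕ) : K :=
  ∑ r ∈ range M, sA q r * t ^ (M + 1 - r)
def sC {K : Type*} [Field K] (q t : K) (M : ℕ) : K :=
  ∑ r ∈ range M, sA q r * gsum q (M - r) * t ^ (M + 1 - r)
def sH {K : Type*} [Field K] (q t : K) (M : ℕ) : K :=
  ∑ r ∈ range M, gsum q (r + 1) * t ^ (M + 3 - r)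
def sE {K : Type*} [Field K] (q t : K) (M : ℕ) : K :=
  ∑ r ∈ range M, gsum q (r + 1) * gsum q (M - r) * t ^ (M + 3 - r)
def sD {K : Type*} [Field K] (q t : K) (M : ℕ) : K :=
  ∑ s ∈ range M, ∑ r ∈ range s, gsum q (r + 1) * gsum q (s - r) * t ^ (2 * M + 1 - r - s)

section
variable {K : Type*} [Field K] (q t : K)

theorem gsum_succ' (k : ℕ) : gsum q (k + 1) = q * gsum q k + 1 := by
  simp [gsum, sum_range_succ', mul_sum, pow_succ, mul_comm]

theorem sA_succ (M : ℕ) : sA q (M + 1) = sA q M + gsum q (M + 2) * q ^ (M + 1) := by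
  rw [sA, sum_range_succ, ← sA]

theorem sB_succ (M : ℕ) :
    sB q t (M + 1) = t * sB q t M + gsum q (M + 2) * gsum q (M + 1) * t := by
  rw [sB, sum_range_succ, sB, mul_sum]
  congr 1
  · refine sum_congr rfl fun s hs => ?_
    have : M + 1 - s = (M - s) + 1 := by have := mem_range.1 hs; omega
    rw [this]; ring
  · rw [show M + 1 - M = 1 by omega]; ring

theorem sG_succ (M : ℕ) : sG q t (M + 1) = t * sG q t M + sA q M * t ^ 2 := by
  rw [sG, sum_range_succ, sG, mul_sum]
  congr 1
  · refine sum_congr rfl fun s hs => ?_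
    have : M + 1 + 1 - s = (M + 1 - s) + 1 := by have := mem_range.1 hs; omega
    rw [this]; ring
  · rw [show M + 1 + 1 - M = 2 by omega]

theorem sC_succ (M : ℕ) : sC q t (M + 1) = q * t * sC q t M + sG q t (M + 1) := by
  have h : sC q t (M + 1) = ∑ r ∈ range (M + 1),
      (q * (sA q r * gsum q (M - r) * t ^ (M + 1 + 1 - r)) + sA q r * t ^ (M + 1 + 1 - r)) := by
    rw [sC]
    refine sum_congr rfl fun s hs => ?_
    have : M + 1 - s = (M - s) + 1 := by have := mem_range.1 hs; omega
    rw [this, gsum_succ']; ring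
  rw [h, sum_add_distrib, ← sG, sum_range_succ, sC, mul_sum]
  congr 1
  rw [Nat.sub_self]
  simp only [gsum, range_zero, sum_empty, mul_zero, zero_mul, add_zero]
  refine sum_congr rfl fun s hs => ?_
  have : M + 1 + 1 - s = (M + 1 - s) + 1 := by have := mem_range.1 hs; omega
  rw [this]; ring

theorem sH_succ (M : ℕ) : sH q t (M + 1) = t * sH q t M + gsum q (M + 1) * t ^ 4 := by
  rw [sH, sum_range_succ, sH, mul_sum]
  congr 1
  · refine sum_congr rfl fun s hs => ?_
    have : M + 1 + 3 - s = (M + 3 - s) + 1 := by have := mem_range.1 hs; omega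
    rw [this]; ring
  · rw [show M + 1 + 3 - M = 4 by omega]

theorem sE_succ (M : ℕ) : sE q t (M + 1) = q * t * sE q t M + sH q t (M + 1) := by
  have h : sE q t (M + 1) = ∑ r ∈ range (M + 1),
      (q * (gsum q (r + 1) * gsum q (M - r) * t ^ (M + 1 + 3 - r)) +
        gsum q (r + 1) * t ^ (M + 1 + 3 - r)) := by
    rw [sE]
    refine sum_congr rfl fun s hs => ?_
    have : M + 1 - s = (M - s) + 1 := by have := mem_range.1 hs; omega
    rw [this, gsum_succ' q (M - s)]; ring
  rw [h, sum_add_distrib, ← sH, sum_range_succ, sE, mul_sum]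
  congr 1
  rw [Nat.sub_self]
  simp only [gsum, range_zero, sum_empty, mul_zero, zero_mul, add_zero]
  refine sum_congr rfl fun s hs => ?_
  have : M + 1 + 3 - s = (M + 3 - s) + 1 := by have := mem_range.1 hs; omega
  rw [this]; ring

theorem sD_succ (M : ℕ) : sD q t (M + 1) = t ^ 2 * sD q t M + sE q t M := by
  rw [sD, sum_range_succ, sD, sE, mul_sum]
  congr 1
  · refine sum_congr rfl fun s hs => ?_
    rw [mul_sum]
    refine sum_congr rfl fun r hr => ?_
    have : 2 * (M + 1) + 1 - r - s = (2 * M + 1 - r - s) + 2 := by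
      have := mem_range.1 hs; have := mem_range.1 hr; omega
    rw [this]; ring
  · refine sum_congr rfl fun r hr => ?_
    rw [show 2 * (M + 1) + 1 - r - M = M + 3 - r by omega]

theorem sA_closed (h1 : 1 - q ≠ 0) (h2 : 1 + q ≠ 0) (M : ℕ) :
    sA q M = (1 - q * q ^ M) * (1 - q ^ 2 * q ^ M) / ((1 - q) ^ 2 * (1 + q)) := by
  induction M with
  | zero => simp [sA, gsum]; field_simp; ring
  | succ M ih => rw [sA_succ, ih, gsum_closed q h1]; field_simp; ring

variable (h1 : 1 - q ≠ 0) (h2 : 1 + q ≠ 0) (h3 : 1 - t ≠ 0) (h4 : 1 + t ≠ 0) (h5 : q - t ≠ 0)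
  (h6 : q ^ 2 - t ≠ 0) (h7 : q - t ^ 2 ≠ 0) (h8 : 1 - q * t ≠ 0) (hq : q ≠ 0) (ht : t ≠ 0)

include h1 h3 h5 h6 in
theorem sB_closed (M : ℕ) :
    sB q t M = t / (1 - q) ^ 2 * ((1 - t ^ M) / (1 - t) - (q + q ^ 2) * (q ^ M - t ^ M) / (q - t)
      + q ^ 3 * ((q ^ M) ^ 2 - t ^ M) / (q ^ 2 - t)) := by
  induction M with
  | zero => simp [sB]
  | succ M ih =>
    rw [sB_succ, ih, gsum_closed q h1, gsum_closed q h1, pow_succ q M, pow_succ t M, pow_add q M 2]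
    generalize q ^ M = x
    generalize t ^ M = y
    field_simp; ring

include h1 h2 h3 h5 h6 in
theorem sG_closed (M : ℕ) :
    sG q t M = t ^ 2 / ((1 - q) ^ 2 * (1 + q)) * ((1 - t ^ M) / (1 - t)
      - (q + q ^ 2) * (q ^ M - t ^ M) / (q - t)
      + q ^ 3 * ((q ^ M) ^ 2 - t ^ M) / (q ^ 2 - t)) := by
  induction M with
  | zero => simp [sG]
  | succ M ih =>
    rw [sG_succ, ih, sA_closed q h1 h2, pow_succ q M, pow_succ t M]
    generalize q ^ M = x
    generalize t ^ M = y
    field_simp; ring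

include h1 h2 h3 h5 h6 h8 ht in
theorem sC_closed (M : ℕ) :
    sC q t M = t ^ 2 / ((1 - q) ^ 2 * (1 + q)) * (
      (1 - q ^ M * t ^ M) / ((1 - t) * (1 - q * t))
      - (q + q ^ 2) * (q ^ M - q ^ M * t ^ M) / ((q - t) * (1 - t))
      + q ^ 4 * ((q ^ M) ^ 2 - q ^ M * t ^ M) / ((q ^ 2 - t) * (q - t))
      - (1 / (1 - t) - (q + q ^ 2) / (q - t) + q ^ 3 / (q ^ 2 - t)) *
        (t ^ M - q ^ M * t ^ M) / (1 - q)) := by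
  induction M with
  | zero => simp [sC]
  | succ M ih =>
    rw [sC_succ, ih, sG_closed q t h1 h2 h3 h5 h6, pow_succ q M, pow_succ t M]
    generalize q ^ M = x
    generalize t ^ M = y
    field_simp; ring

include h1 h3 h5 in
theorem sH_closed (M : ℕ) :
    sH q t M = t ^ 4 / (1 - q) * ((1 - t ^ M) / (1 - t) - q * (q ^ M - t ^ M) / (q - t)) := by
  induction M with
  | zero => simp [sH]
  | succ M ih =>
    rw [sH_succ, ih, gsum_closed q h1, pow_succ q M, pow_succ t M]
    generalize q ^ M = x
    generalize t ^ M = y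
    field_simp; ring

include h1 h3 h5 h8 ht in
theorem sE_closed (M : ℕ) :
    sE q t M = t ^ 4 / (1 - q) * ((1 - q ^ M * t ^ M) / ((1 - t) * (1 - q * t))
      - q * (q ^ M - q ^ M * t ^ M) / ((q - t) * (1 - t))
      - (1 / (1 - t) - q / (q - t)) * (t ^ M - q ^ M * t ^ M) / (1 - q)) := by
  induction M with
  | zero => simp [sE]
  | succ M ih =>
    rw [sE_succ, ih, sH_closed q t h1 h3 h5, pow_succ q M, pow_succ t M]
    generalize q ^ M = x
    generalize t ^ M = y
    field_simp; ring

include h1 h3 h4 h5 h7 h8 hq ht in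
theorem sD_closed (M : ℕ) :
    sD q t M = t ^ 4 / (1 - q) * (
      1 / ((1 - t) * (1 - q * t)) * ((1 - (t ^ M) ^ 2) / ((1 - t) * (1 + t)))
      - q / ((q - t) * (1 - t)) * ((q ^ M - (t ^ M) ^ 2) / (q - t ^ 2))
      - (1 / (1 - t) - q / (q - t)) / (1 - q) * ((t ^ M - (t ^ M) ^ 2) / (t * (1 - t)))
      + (- 1 / ((1 - t) * (1 - q * t)) + q / ((q - t) * (1 - t))
         + (1 / (1 - t) - q / (q - t)) / (1 - q)) *
         ((q ^ M * t ^ M - (t ^ M) ^ 2) / (t * (q - t)))) := by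
  induction M with
  | zero => simp [sD]
  | succ M ih =>
    rw [sD_succ, ih, sE_closed q t h1 h3 h5 h8 ht, pow_succ q M, pow_succ t M]
    generalize q ^ M = x
    generalize t ^ M = y
    field_simp; ring

include h1 h2 h3 h4 h5 h6 h7 h8 hq ht in
theorem sum_symm (M : ℕ) :
    sA q M + sB q t M + sC q t M + sD q t M = sA t M + sB t q M + sC t q M + sD t q M := by
  have h5' : t - q ≠ 0 := by intro h; apply h5; linear_combination -h
  have h6' : t ^ 2 - q ≠ 0 := by intro h; apply h7; linear_combination -h
  have h7' : t - q ^ 2 ≠ 0 := by intro h; apply h6; linear_combination -h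
  have h8' : 1 - t * q ≠ 0 := by rwa [mul_comm]
  rw [sA_closed q h1 h2, sA_closed t h3 h4, sB_closed q t h1 h3 h5 h6, sB_closed t q h3 h1 h5' h6',
    sC_closed q t h1 h2 h3 h5 h6 h8 ht, sC_closed t q h3 h4 h1 h5' h6' h8' hq,
    sD_closed q t h1 h3 h4 h5 h7 h8 hq ht, sD_closed t q h3 h1 h2 h5' h7' h8' ht hq]
  generalize q ^ M = x
  generalize t ^ M = y
  have e5 : t - q = -(q - t) := by ring
  have e6 : t ^ 2 - q = -(q - t ^ 2) := by ring
  have e7 : t - q ^ 2 = -(q ^ 2 - t) := by ring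
  have e8 : 1 - t * q = 1 - q * t := by ring
  rw [e5, e6, e7, e8]
  field_simp
  ring
end

def quads (M : ℕ) : Finset (ℕ × ℕ × ℕ × ℕ) :=
  (range (M + 1) ×ˢ range (M + 1) ×ˢ range (M + 1) ×ˢ range (M + 1)).filter
    (fun x => x.1 ≤ x.2.1 ∧ x.1 ≤ x.2.2.1 ∧ x.2.1 ≤ x.2.2.2 ∧ x.2.2.1 ≤ x.2.2.2)

theorem mem_quads (M a b c d : ℕ) :
    (a, b, c, d) ∈ quads M ↔ a ≤ b ∧ a ≤ c ∧ b ≤ d ∧ c ≤ d ∧ d ≤ M := by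
  simp only [quads, mem_filter, mem_product, mem_range]; omega

def qarea (x : ℕ × ℕ × ℕ × ℕ) : ℕ := x.2.2.1 + x.2.2.2 - x.1 - x.2.1

def qbounce (M : ℕ) (x : ℕ × ℕ × ℕ × ℕ) : ℕ :=
  if x.2.1 = 0 then 0 else if x.1 = 0 then 1 + M - x.2.2.2
  else if x.2.1 ≤ x.2.2.1 then 2 + M - x.2.2.1 else 3 + 2 * M - x.2.2.1 - x.2.2.2

section
variable {K : Type*} [Field K] (q t : K) (M : ℕ)

theorem partA : ∑ x ∈ (quads M).filter (fun x => x.2.1 = 0), q ^ qarea x * t ^ qbounce M x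
    = sA q M := by
  simp only [sA, gsum, sum_mul]
  rw [sum_sigma']
  refine sum_nbij' (fun x => ⟨x.2.2.2, x.2.2.1⟩) (fun y => (0, 0, y.2, y.1)) ?_ ?_ ?_ ?_ ?_
  · rintro ⟨a, b, c, d⟩ h
    simp only [mem_filter, mem_quads, mem_sigma, mem_range, and_true, true_and] at *; omega
  · rintro ⟨s, r⟩ h
    simp only [mem_filter, mem_quads, mem_sigma, mem_range, and_true, true_and] at *; omega
  · rintro ⟨a, b, c, d⟩ h
    simp only [mem_filter, mem_quads] at h
    simp only [Prod.mk.injEq, and_true, true_and]; omega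
  · rintro ⟨s, r⟩ h
    rfl
  · rintro ⟨a, b, c, d⟩ h
    simp only [mem_filter, mem_quads] at h
    obtain ⟨h, rfl⟩ := h
    have : a = 0 := by omega
    subst this
    simp [qarea, qbounce, pow_add]

theorem partB : ∑ x ∈ ((quads M).filter (fun x => ¬ x.2.1 = 0)).filter (fun x => x.1 = 0),
    q ^ qarea x * t ^ qbounce M x = sB q t M := by
  simp only [sB, gsum, sum_mul_sum]
  simp only [sum_mul]
  simp only [sum_sigma']
  refine sum_nbij' (fun x => ⟨x.2.2.2 - 1, x.2.2.1, x.2.2.2 - x.2.1⟩)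
    (fun y => (0, y.1 + 1 - y.2.2, y.2.1, y.1 + 1)) ?_ ?_ ?_ ?_ ?_
  · rintro ⟨a, b, c, d⟩ h
    simp only [mem_filter, mem_quads, mem_sigma, mem_range, and_true, true_and] at *; omega
  · rintro ⟨s, r, i⟩ h
    simp only [mem_filter, mem_quads, mem_sigma, mem_range, and_true, true_and] at *; omega
  · rintro ⟨a, b, c, d⟩ h
    simp only [mem_filter, mem_quads] at h
    simp only [Prod.mk.injEq, and_true, true_and]; omega
  · rintro ⟨s, r, i⟩ h
    simp only [mem_sigma, mem_range] at h
    simp only [Sigma.mk.injEq, heq_eq_eq, and_true, true_and]; omega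
  · rintro ⟨a, b, c, d⟩ h
    simp only [mem_filter, mem_quads] at h
    obtain ⟨⟨h, hb⟩, rfl⟩ := h
    simp only [qarea, qbounce, if_neg hb, if_true]
    rw [← pow_add]; congr 2 <;> omega

theorem partC : ∑ x ∈ (((quads M).filter (fun x => ¬ x.2.1 = 0)).filter (fun x => ¬ x.1 = 0)).filter
    (fun x => x.2.1 ≤ x.2.2.1),
    q ^ qarea x * t ^ qbounce M x = sC q t M := by
  simp only [sC, sA, gsum, sum_mul]
  simp only [mul_sum]
  simp only [sum_mul]
  simp only [sum_sigma']
  refine sum_nbij' (fun x => ⟨x.2.2.1 - 1, x.2.2.1 - x.1, x.2.2.1 - x.2.1, x.2.2.2 - x.2.2.1⟩)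
    (fun y => (y.1 + 1 - y.2.1, y.1 + 1 - y.2.2.1, y.1 + 1, y.1 + 1 + y.2.2.2)) ?_ ?_ ?_ ?_ ?_
  · rintro ⟨a, b, c, d⟩ h
    simp only [mem_filter, mem_quads, mem_sigma, mem_range, and_true, true_and] at *; omega
  · rintro ⟨s, r, i, k⟩ h
    simp only [mem_filter, mem_quads, mem_sigma, mem_range, and_true, true_and] at *; omega
  · rintro ⟨a, b, c, d⟩ h
    simp only [mem_filter, mem_quads] at h
    simp only [Prod.mk.injEq, and_true, true_and]; omega
  · rintro ⟨s, r, i, k⟩ h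
    simp only [mem_sigma, mem_range] at h
    simp only [Sigma.mk.injEq, heq_eq_eq, and_true, true_and]; omega
  · rintro ⟨a, b, c, d⟩ h
    simp only [mem_filter, mem_quads] at h
    obtain ⟨⟨⟨h, hb⟩, ha⟩, hc⟩ := h
    simp only [qarea, qbounce, if_neg hb, if_neg ha, if_pos hc]
    rw [← pow_add, ← pow_add]; congr 2 <;> omega

theorem partD : ∑ x ∈ (((quads M).filter (fun x => ¬ x.2.1 = 0)).filter (fun x => ¬ x.1 = 0)).filter
    (fun x => ¬ x.2.1 ≤ x.2.2.1),
    q ^ qarea x * t ^ qbounce M x = sD q t M := by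
  simp only [sD, gsum, sum_mul_sum]
  simp only [sum_mul]
  simp only [sum_sigma']
  refine sum_nbij' (fun x => ⟨x.2.2.2 - 1, x.2.2.1 - 1, x.2.2.1 - x.1, x.2.2.2 - x.2.1⟩)
    (fun y => (y.2.1 + 1 - y.2.2.1, y.1 + 1 - y.2.2.2, y.2.1 + 1, y.1 + 1)) ?_ ?_ ?_ ?_ ?_
  · rintro ⟨a, b, c, d⟩ h
    simp only [mem_filter, mem_quads, mem_sigma, mem_range, and_true, true_and] at *; omega
  · rintro ⟨s, r, i, k⟩ h
    simp only [mem_filter, mem_quads, mem_sigma, mem_range, and_true, true_and] at *; omega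
  · rintro ⟨a, b, c, d⟩ h
    simp only [mem_filter, mem_quads] at h
    simp only [Prod.mk.injEq, and_true, true_and]; omega
  · rintro ⟨s, r, i, k⟩ h
    simp only [mem_sigma, mem_range] at h
    simp only [Sigma.mk.injEq, heq_eq_eq, and_true, true_and]; omega
  · rintro ⟨a, b, c, d⟩ h
    simp only [mem_filter, mem_quads] at h
    obtain ⟨⟨⟨h, hb⟩, ha⟩, hc⟩ := h
    simp only [qarea, qbounce, if_neg hb, if_neg ha, if_neg hc]
    rw [← pow_add]; congr 2 <;> omega

theorem quads_sum : ∑ x ∈ quads M, q ^ qarea x * t ^ qbounce M x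
    = sA q M + sB q t M + sC q t M + sD q t M := by
  rw [← partA q t M, ← partB q t M, ← partC q t M, ← partD q t M, add_assoc, add_assoc,
    sum_filter_add_sum_filter_not, sum_filter_add_sum_filter_not, sum_filter_add_sum_filter_not]
end

theorem quads_sum_symm {P : Type*} [CommRing P] [IsDomain P] (x y : P) (M : ℕ)
    (h1 : 1 - x ≠ 0) (h2 : 1 + x ≠ 0) (h3 : 1 - y ≠ 0) (h4 : 1 + y ≠ 0) (h5 : x - y ≠ 0)
    (h6 : x ^ 2 - y ≠ 0) (h7 : x - y ^ 2 ≠ 0) (h8 : 1 - x * y ≠ 0) (hx : x ≠ 0) (hy : y ≠ 0) :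
    ∑ z ∈ quads M, x ^ qarea z * y ^ qbounce M z = ∑ z ∈ quads M, y ^ qarea z * x ^ qbounce M z := by
  have hφ := IsFractionRing.injective P (FractionRing P)
  apply hφ
  have nz : ∀ p : P, p ≠ 0 → algebraMap P (FractionRing P) p ≠ 0 := by
    intro p hp h
    rw [map_eq_zero_iff _ hφ] at h
    exact hp h
  simp only [map_sum, map_mul, map_pow]
  rw [quads_sum, quads_sum]
  apply sum_symm
  · simpa only [map_sub, map_one] using nz _ h1
  · simpa only [map_add, map_one] using nz _ h2
  · simpa only [map_sub, map_one] using nz _ h3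
  · simpa only [map_add, map_one] using nz _ h4
  · simpa only [map_sub] using nz _ h5
  · simpa only [map_sub, map_pow] using nz _ h6
  · simpa only [map_sub, map_pow] using nz _ h7
  · simpa only [map_sub, map_mul, map_one] using nz _ h8
  · exact nz _ hx
  · exact nz _ hy

open Polynomial in
theorem quads_card_symm (M u v : ℕ) :
    ((quads M).filter (fun x => qarea x = u ∧ qbounce M x = v)).card =
    ((quads M).filter (fun x => qarea x = v ∧ qbounce M x = u)).card := by
  have key : ∑ x ∈ quads M, (C X : ℤ[X][X]) ^ qarea x * X ^ qbounce M x
      = ∑ x ∈ quads M, (X : ℤ[X][X]) ^ qarea x * (C X) ^ qbounce M x := by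
    have nz : ∀ p : ℤ[X][X], (p.eval (C 3)).eval 2 ≠ 0 → p ≠ 0 := by
      intro p hp h
      simp [h] at hp
    apply quads_sum_symm <;> apply nz <;> simp
  have k2 := congrArg (fun p : ℤ[X][X] => (p.coeff v).coeff u) key
  simp only [finsetSum_coeff, ← C_pow, coeff_C_mul_X_pow, X_pow_mul_C] at k2
  have e1 : ∀ i j a b : ℕ, (if a = i then (X : ℤ[X]) ^ b else 0).coeff j =
      if b = j ∧ a = i then 1 else 0 := by
    intro i j a b
    split_ifs <;> simp_all [coeff_X_pow, eq_comm]
  have e2 : ∀ i j a b : ℕ, (if i = a then (X : ℤ[X]) ^ b else 0).coeff j =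
      if b = j ∧ a = i then 1 else 0 := by
    intro i j a b
    rw [← e1]; simp only [eq_comm]
  simp only [e2] at k2
  rw [sum_boole, sum_boole] at k2
  have k3 := Nat.cast_injective (R := ℤ) k2
  rw [k3]
  congr 1
  ext x; simp only [mem_filter, and_comm]
end

/-! ### Paths with three north steps -/

def pth (m a b c : ℕ) : List Step :=
  List.replicate a Step.E ++ Step.N :: (List.replicate (b - a) Step.E ++ Step.N ::
    (List.replicate (c - b) Step.E ++ Step.N :: List.replicate (m - c) Step.E))

theorem countE_pth {m a b c : ℕ} (h1 : a ≤ b) (h2 : b ≤ c) (h3 : c ≤ m) :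
    countE (pth m a b c) = m := by
  simp [countE, pth, List.count_append, List.count_cons, List.count_replicate]; omega

theorem countN_pth (m a b c : ℕ) : countN (pth m a b c) = 3 := by
  simp [countN, pth, List.count_append, List.count_cons, List.count_replicate]

theorem aux_rep (a h : ℕ) (w : List Step) :
    colHeightsAux (List.replicate a Step.E ++ w) h = List.replicate a h ++ colHeightsAux w h := by
  induction a with
  | zero => simp
  | succ a ih => simp [List.replicate_succ, colHeightsAux, ih]

theorem colHeight_pth {m a b c : ℕ} (h1 : a ≤ b) (h2 : b ≤ c) (h3 : c ≤ m) {i : ℕ} (hi : i < m) :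
    colHeight (pth m a b c) i = if i < a then 0 else if i < b then 1 else if i < c then 2 else 3 := by
  have e : List.replicate (m - c) Step.E = List.replicate (m - c) Step.E ++ [] := by simp
  rw [pth, colHeight, e]
  simp only [aux_rep, colHeightsAux]
  simp only [List.getD_eq_getElem?_getD, List.getElem?_append, List.getElem?_replicate,
    List.length_replicate]
  split_ifs <;> first | omega | simp

theorem exists_split (k : ℕ) (w : List Step) (h : countN w = k + 1) :
    ∃ a w', w = List.replicate a Step.E ++ Step.N :: w' ∧ countN w' = k := by
  induction w with
  | nil => simp [countN] at h
  | cons s w ih =>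
    cases s with
    | E =>
      obtain ⟨a, w', rfl, h'⟩ := ih (by simpa [countN] using h)
      exact ⟨a + 1, w', by simp [List.replicate_succ], h'⟩
    | N => exact ⟨0, w, by simp, by simpa [countN] using h⟩

theorem all_east (w : List Step) (h : countN w = 0) :
    ∃ a, w = List.replicate a Step.E := by
  induction w with
  | nil => exact ⟨0, rfl⟩
  | cons s w ih =>
    cases s with
    | E =>
      obtain ⟨a, rfl⟩ := ih (by simpa [countN] using h)
      exact ⟨a + 1, by simp [List.replicate_succ]⟩
    | N => simp [countN] at h

theorem exists_pth (m : ℕ) (w : List Step) (hE : countE w = m) (hN : countN w = 3) :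
    ∃ a b c, a ≤ b ∧ b ≤ c ∧ c ≤ m ∧ w = pth m a b c := by
  obtain ⟨a, w1, rfl, h1⟩ := exists_split 2 w hN
  obtain ⟨b, w2, rfl, h2⟩ := exists_split 1 w1 h1
  obtain ⟨c, w3, rfl, h3⟩ := exists_split 0 w2 h2
  obtain ⟨d, rfl⟩ := all_east w3 h3
  simp [countE, List.count_append, List.count_cons, List.count_replicate] at hE
  refine ⟨a, a + b, a + b + c, by omega, by omega, by omega, ?_⟩
  rw [pth, show a + b - a = b by omega, show a + b + c - (a + b) = c by omega,
    show m - (a + b + c) = d by omega]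

theorem rep_inj (a a' : ℕ) (w w' : List Step)
    (h : List.replicate a Step.E ++ Step.N :: w = List.replicate a' Step.E ++ Step.N :: w') :
    a = a' ∧ w = w' := by
  induction a generalizing a' with
  | zero =>
    cases a' with
    | zero => simpa using h
    | succ a' => simp [List.replicate_succ] at h
  | succ a ih =>
    cases a' with
    | zero => simp [List.replicate_succ] at h
    | succ a' =>
      obtain ⟨h1, h2⟩ := ih a' (by simpa [List.replicate_succ] using h)
      exact ⟨by omega, h2⟩

theorem pth_inj {m a b c a' b' c' : ℕ} (h1 : a ≤ b) (h2 : b ≤ c) (h1' : a' ≤ b') (h2' : b' ≤ c')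
    (h : pth m a b c = pth m a' b' c') : a = a' ∧ b = b' ∧ c = c' := by
  obtain ⟨e1, h⟩ := rep_inj _ _ _ _ h
  obtain ⟨e2, h⟩ := rep_inj _ _ _ _ h
  obtain ⟨e3, h⟩ := rep_inj _ _ _ _ h
  omega

theorem mem_pathPts (w : List Step) (x y : ℕ) :
    (x, y) ∈ pathPts w ↔ ∃ i ≤ w.length, countE (w.take i) = x ∧ countN (w.take i) = y := by
  simp [pathPts, pathPos, Nat.lt_succ_iff]

theorem pts_cons_E (w : List Step) (x y : ℕ) :
    (x, y) ∈ pathPts (Step.E :: w) ↔ (x = 0 ∧ y = 0) ∨ (1 ≤ x ∧ (x - 1, y) ∈ pathPts w) := by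
  simp only [mem_pathPts]
  constructor
  · rintro ⟨i, hi, h1, h2⟩
    cases i with
    | zero => left; simp [countE, countN] at h1 h2; omega
    | succ i =>
      right
      simp [countE, countN] at h1 h2 hi
      exact ⟨by omega, i, hi, by simp [countE]; omega, by simpa [countN]⟩
  · rintro (⟨rfl, rfl⟩ | ⟨h, i, hi, h1, h2⟩)
    · exact ⟨0, by simp, by simp [countE], by simp [countN]⟩
    · refine ⟨i + 1, by simpa using hi, ?_, ?_⟩
      · simp [countE] at *; omega
      · simpa [countN] using h2

theorem pts_cons_N (w : List Step) (x y : ℕ) :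
    (x, y) ∈ pathPts (Step.N :: w) ↔ (x = 0 ∧ y = 0) ∨ (1 ≤ y ∧ (x, y - 1) ∈ pathPts w) := by
  simp only [mem_pathPts]
  constructor
  · rintro ⟨i, hi, h1, h2⟩
    cases i with
    | zero => left; simp [countE, countN] at h1 h2; omega
    | succ i =>
      right
      simp [countE, countN] at h1 h2 hi
      exact ⟨by omega, i, hi, by simpa [countE], by simp [countN]; omega⟩
  · rintro (⟨rfl, rfl⟩ | ⟨h, i, hi, h1, h2⟩)
    · exact ⟨0, by simp, by simp [countE], by simp [countN]⟩
    · refine ⟨i + 1, by simpa using hi, ?_, ?_⟩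
      · simpa [countE] using h1
      · simp [countN] at *; omega

theorem pts_rep (a : ℕ) (w : List Step) (x y : ℕ) :
    (x, y) ∈ pathPts (List.replicate a Step.E ++ w) ↔
      (x < a ∧ y = 0) ∨ (a ≤ x ∧ (x - a, y) ∈ pathPts w) := by
  induction a generalizing x with
  | zero => simp
  | succ a ih =>
    rw [List.replicate_succ, List.cons_append, pts_cons_E, ih]
    rw [show x - 1 - a = x - (a + 1) by omega]
    by_cases hx : x = 0
    · subst hx; simp
    · have e1 : x - 1 < a ↔ x < a + 1 := by omega
      have e2 : a ≤ x - 1 ↔ a + 1 ≤ x := by omega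
      have e3 : 1 ≤ x := by omega
      simp [hx, e1, e2, e3]

theorem pts_nil (x y : ℕ) : (x, y) ∈ pathPts [] ↔ x = 0 ∧ y = 0 := by
  simp [mem_pathPts, countE, countN, eq_comm]

theorem mem_pth {m a b c : ℕ} (h1 : a ≤ b) (h2 : b ≤ c) (h3 : c ≤ m) (x y : ℕ) :
    (x, y) ∈ pathPts (pth m a b c) ↔ (y = 0 ∧ x ≤ a) ∨ (y = 1 ∧ a ≤ x ∧ x ≤ b) ∨
      (y = 2 ∧ b ≤ x ∧ x ≤ c) ∨ (y = 3 ∧ c ≤ x ∧ x ≤ m) := by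
  have e : List.replicate (m - c) Step.E = List.replicate (m - c) Step.E ++ [] := by simp
  rw [pth, e]
  simp only [pts_rep, pts_cons_N, pts_nil]
  omega

def mkPoly (M a b c d : ℕ) (h : a ≤ b ∧ a ≤ c ∧ b ≤ d ∧ c ≤ d ∧ d ≤ M) : Polyomino (M + 1) 3 where
  lower := pth (M + 1) (c + 1) (d + 1) (M + 1)
  upper := pth (M + 1) 0 a b
  lowerE := countE_pth (by omega) (by omega) (by omega)
  lowerN := countN_pth _ _ _ _
  upperE := countE_pth (by omega) (by omega) (by omega)
  upperN := countN_pth _ _ _ _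
  above := by
    intro i hi
    rw [colHeight_pth (by omega) (by omega) (by omega) hi,
      colHeight_pth (by omega) (by omega) (by omega) hi]
    split_ifs <;> omega
  meet := by
    ext ⟨x, y⟩
    rw [Finset.mem_inter, mem_pth (by omega) (by omega) (by omega),
      mem_pth (by omega) (by omega) (by omega)]
    simp only [Finset.mem_insert, Finset.mem_singleton, Prod.mk.injEq]
    omega

theorem exists_mkPoly (M : ℕ) (P : Polyomino (M + 1) 3) :
    ∃ a b c d, ∃ h : a ≤ b ∧ a ≤ c ∧ b ≤ d ∧ c ≤ d ∧ d ≤ M, mkPoly M a b c d h = P := by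
  obtain ⟨lo, up, lE, lN, uE, uN, ab, me⟩ := P
  obtain ⟨a', b', c', g1, g2, g3, rfl⟩ := exists_pth _ _ lE lN
  obtain ⟨a, b, c, f1, f2, f3, rfl⟩ := exists_pth _ _ uE uN
  have ab0 := ab 0 (by omega)
  rw [colHeight_pth g1 g2 g3 (by omega), colHeight_pth f1 f2 f3 (by omega)] at ab0
  have key : ∀ x y, _ := fun x y => Finset.ext_iff.1 me (x, y)
  simp only [Finset.mem_inter, mem_pth f1 f2 f3, mem_pth g1 g2 g3, Finset.mem_insert,
    Finset.mem_singleton, Prod.mk.injEq] at key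
  have ha : a = 0 := by
    have k1 := key 1 0
    clear key me ab
    split_ifs at ab0 <;> omega
  subst ha
  clear ab0
  have q0 : 1 ≤ a' := by
    have k2 := key 0 1
    omega
  have q2 : b < a' := by
    have k3 := key a' 1
    omega
  have q3 : c < b' := by
    have k4 := key b' 2
    omega
  have q1 : c' = M + 1 := by
    have k8 := key c' 3
    omega
  subst q1
  refine ⟨b, c, a' - 1, b' - 1, by omega, ?_⟩
  simp only [mkPoly, show a' - 1 + 1 = a' by omega, show b' - 1 + 1 = b' by omega]

theorem sum_ind (m b : ℕ) (h : b ≤ m) : ∑ i ∈ Finset.range m, (if i < b then 1 else 0) = b := by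
  rw [Finset.sum_boole]
  have : Finset.filter (fun i => i < b) (Finset.range m) = Finset.range b := by
    ext i; simp; omega
  simp [this]

theorem area_mkPoly (M a b c d : ℕ) (h) : area (mkPoly M a b c d h) = qarea (a, b, c, d) := by
  have e : (∑ i ∈ Finset.range (M + 1), (colHeight (mkPoly M a b c d h).upper i -
      colHeight (mkPoly M a b c d h).lower i)) + (a + b) = (M + 1) + (c + 1) + (d + 1) := by
    have s1 := sum_ind (M + 1) a (by omega)
    have s2 := sum_ind (M + 1) b (by omega)
    have s3 := sum_ind (M + 1) (c + 1) (by omega)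
    have s4 := sum_ind (M + 1) (d + 1) (by omega)
    have s5 := sum_ind (M + 1) (M + 1) le_rfl
    refine Eq.trans (congrArg₂ _ rfl (congrArg₂ _ s1.symm s2.symm))
      (Eq.trans ?_ (congrArg₂ _ (congrArg₂ _ s5 s3) s4))
    simp only [← Finset.sum_add_distrib]
    refine Finset.sum_congr rfl fun i hi => ?_
    have hi := Finset.mem_range.1 hi
    simp only [mkPoly]
    rw [colHeight_pth (by omega) (by omega) (by omega) hi,
      colHeight_pth (by omega) (by omega) (by omega) hi]
    split_ifs <;> omega
  simp only [area, qarea]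
  omega

theorem eastTarget_eq (hL : ℕ → ℕ) (m x y s : ℕ) (h1 : s ≤ m)
    (h2 : ∀ i < s, ¬ (x ≤ i ∧ y ≤ hL i)) (h3 : s < m → x ≤ s ∧ y ≤ hL s) :
    eastTarget hL m x y = s := by
  rw [eastTarget]
  have e : List.range m = List.range s ++ (List.range (m - s)).map (fun k => s + k) := by
    rw [← List.range_add]; congr 1; omega
  rw [e, List.filter_append]
  have e1 : (List.range s).filter (fun i => decide (x ≤ i ∧ y ≤ hL i)) = [] := by
    rw [List.filter_eq_nil_iff]
    intro i hi
    simpa using h2 i (List.mem_range.1 hi)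
  rw [e1, List.nil_append]
  by_cases hs : s < m
  · obtain ⟨k, hk⟩ : ∃ k, m - s = k + 1 := ⟨m - s - 1, by omega⟩
    rw [hk, List.range_succ_eq_map, List.map_cons, List.filter_cons]
    have := h3 hs
    simp [this]
  · have : s = m := by omega
    simp [this]

theorem bounceAux_done (hU hL : ℕ → ℕ) (m n f j : ℕ) : bounceAux hU hL m n f m n j = 0 := by
  cases f <;> simp [bounceAux]

theorem bounceAux_last (hU hL : ℕ → ℕ) (m n f x y j : ℕ) (hy : y < n) (hu : hU (x - 1) = n) :
    bounceAux hU hL m n (f + 1) x y j = (j + 1) * ((n - y) + (m - x)) := by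
  rw [bounceAux, if_neg (by omega)]
  simp only [hu, if_true, bounceAux_done, add_zero]

theorem bounceAux_step (hU hL : ℕ → ℕ) (m n f x y j y' x' : ℕ) (hy : y < n) (hu : hU (x - 1) = y')
    (hy' : y' < n) (h1 : x' ≤ m)
    (h2 : ∀ i < x', ¬ (x ≤ i ∧ y' ≤ hL i)) (h3 : x' < m → x ≤ x' ∧ y' ≤ hL x') :
    bounceAux hU hL m n (f + 1) x y j =
      (j + 1) * ((y' - y) + (x' - x)) + bounceAux hU hL m n f x' y' (j + 1) := by
  rw [bounceAux, if_neg (by omega)]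
  simp only [hu, if_neg (show ¬ y' = n by omega), eastTarget_eq hL m x y' x' h1 h2 h3]

theorem bounce_mkPoly (M a b c d : ℕ) (h) :
    bounce (mkPoly M a b c d h) = qbounce M (a, b, c, d) := by
  have hU : ∀ i < M + 1, colHeight (mkPoly M a b c d h).upper i =
      if i < a then 1 else if i < b then 2 else 3 := by
    intro i hi
    simp only [mkPoly]
    rw [colHeight_pth (by omega) (by omega) (by omega) hi, if_neg (by omega)]
  have hL : ∀ i < M + 1, colHeight (mkPoly M a b c d h).lower i =
      if i < c + 1 then 0 else if i < d + 1 then 1 else 2 := by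
    intro i hi
    simp only [mkPoly]
    rw [colHeight_pth (by omega) (by omega) (by omega) hi, if_pos hi]
  rw [bounce]
  generalize colHeight (mkPoly M a b c d h).upper = U at *
  generalize colHeight (mkPoly M a b c d h).lower = L at *
  simp only [qbounce]
  have to2 : ∀ f x y j, y < 2 → 1 ≤ x → x ≤ d + 1 → U (x - 1) = 2 →
      bounceAux U L (M + 1) 3 (f + 2) x y j =
      (j + 1) * ((2 - y) + (d + 1 - x)) + (j + 2) * (1 + (M - d)) := by
    intro f x y j hy hx hxd hu
    rw [bounceAux_step U L (M + 1) 3 (f + 1) x y j 2 (d + 1) (by omega) hu (by omega) (by omega)]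
    · rw [bounceAux_last _ _ _ _ _ _ _ _ (by omega)]
      · congr 2; omega
      · rw [hU _ (by omega)]; split_ifs <;> omega
    · intro i hi
      rw [hL i (by omega)]; split_ifs <;> omega
    · intro hd
      rw [hL _ hd]; split_ifs <;> omega
  have fuel : M + 1 + 3 + 2 = M + 3 + 3 := by omega
  rw [fuel]
  by_cases hb : b = 0
  · rw [if_pos hb, bounceAux_last _ _ _ _ _ _ _ _ (by omega)]
    · omega
    · rw [hU _ (by omega)]; split_ifs <;> omega
  rw [if_neg hb]
  by_cases ha : a = 0
  · rw [if_pos ha, to2 (M + 3 + 1) _ _ _ (by omega) (by omega) (by omega)]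
    · omega
    · rw [hU _ (by omega)]; split_ifs <;> omega
  rw [if_neg ha, bounceAux_step U L (M + 1) 3 (M + 3 + 2) 1 0 0 1 (c + 1) (by omega) _ (by omega)
    (by omega)]
  · by_cases hc : b ≤ c
    · rw [if_pos hc, bounceAux_last _ _ _ _ _ _ _ _ (by omega)]
      · omega
      · rw [hU _ (by omega)]; split_ifs <;> omega
    · rw [if_neg hc, to2 (M + 3) _ _ _ (by omega) (by omega) (by omega)]
      · omega
      · rw [hU _ (by omega)]; split_ifs <;> omega
  · intro i hi
    rw [hL i (by omega)]; split_ifs <;> omega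
  · intro hd
    rw [hL _ hd]; split_ifs <;> omega
  · rw [hU _ (by omega)]; split_ifs <;> omega

def toPoly (M : ℕ) (x : {x // x ∈ quads M}) : Polyomino (M + 1) 3 :=
  mkPoly M x.1.1 x.1.2.1 x.1.2.2.1 x.1.2.2.2 ((mem_quads M _ _ _ _).1 x.2)

theorem toPoly_bij (M : ℕ) : Function.Bijective (toPoly M) := by
  constructor
  · rintro ⟨⟨a, b, c, d⟩, hx⟩ ⟨⟨a', b', c', d'⟩, hx'⟩ h
    have h1 := (mem_quads M _ _ _ _).1 hx
    have h2 := (mem_quads M _ _ _ _).1 hx'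
    have hu := congrArg Polyomino.upper h
    have hl := congrArg Polyomino.lower h
    simp only [toPoly, mkPoly] at hu hl
    have := pth_inj (by omega) (by omega) (by omega) (by omega) hu
    have := pth_inj (by omega) (by omega) (by omega) (by omega) hl
    simp only [Subtype.mk.injEq, Prod.mk.injEq]
    omega
  · intro P
    obtain ⟨a, b, c, d, h, rfl⟩ := exists_mkPoly M P
    exact ⟨⟨(a, b, c, d), (mem_quads M _ _ _ _).2 h⟩, rfl⟩

theorem card_poly (M u v : ℕ) :
    Nat.card {P : Polyomino (M + 1) 3 // area P = u ∧ bounce P = v} =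
    ((quads M).filter (fun x => qarea x = u ∧ qbounce M x = v)).card := by
  have e1 : {x : {x // x ∈ quads M} // qarea x.1 = u ∧ qbounce M x.1 = v} ≃
      {P : Polyomino (M + 1) 3 // area P = u ∧ bounce P = v} :=
    (Equiv.ofBijective _ (toPoly_bij M)).subtypeEquiv (by
      intro x
      simp only [Equiv.ofBijective_apply, toPoly, area_mkPoly, bounce_mkPoly])
  have e2 : {x : {x // x ∈ quads M} // qarea x.1 = u ∧ qbounce M x.1 = v} ≃
      {x // x ∈ (quads M).filter (fun x => qarea x = u ∧ qbounce M x = v)} :=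
    (Equiv.subtypeSubtypeEquivSubtypeInter (fun x => x ∈ quads M)
      (fun x => qarea x = u ∧ qbounce M x = v)).trans
      (Equiv.subtypeEquivRight (by intro x; rw [Finset.mem_filter]))
  rw [← Nat.card_congr e1, Nat.card_congr e2, Nat.card_eq_fintype_card, Fintype.card_coe]

/-- The `q,t`-symmetry `N_{n,3}(q,t) = N_{n,3}(t,q)` of the `q,t`-Narayana polynomial
defined by (area, bounce) on polyominoes: for all `n ≥ 3` and `u v`, the number of
`P ∈ PP(n-2,3)` with `area P = u` and `bounce P = v` equals the number with
`area P = v` and `bounce P = u`. -/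
theorem narayana_qt_symmetry (n u v : ℕ) (hn : 3 ≤ n) :
    Nat.card {P : Polyomino (n - 2) 3 // area P = u ∧ bounce P = v} =
    Nat.card {P : Polyomino (n - 2) 3 // area P = v ∧ bounce P = u} := by
  obtain ⟨M, rfl⟩ : ∃ M, n = M + 3 := ⟨n - 3, by omega⟩
  rw [show M + 3 - 2 = M + 1 by omega, card_poly, card_poly]
  exact quads_card_symm M u v

end QtN
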